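/- arXiv:1402.6150 — 2 statements merged into one kernel-verified Lean document; each statement's English description precedes it below -/
import Mathlib

section
/- Let p be an odd prime, let q ≥ 2 be an integer divisible by p, let θ ∈ ℚ_p satisfy |θ−1|_p ≤ 1/p, θ ≠ 1+q and θ ≠ 1−q, and let m be an integer with 1 ≤ m ≤ q−1 such that |m|_p = |θ−1|_p = |q|_p. Then for the equation m²·z² + (2m(q−m) − (θ−1)²)·z + (q−m)² = 0: (a) if |(θ−1)² − q²|_p = |q|_p², it has no solution z ∈ ℚ_p with 0 < |z−1|_p < 1; (b) if |q − 2m|_p = |q|_p and either |θ−1+q|_p < |q|_p or |θ−1−q|_p < |q|_p, it has exactly one solution z ∈ ℚ_p with 0 < |z−1|_p < 1. -/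
/-!
Put `t = z - 1`, `μ = m / q` and `δ = (θ - 1) / q`. Since `m z + (q - m) = m t + q`, the
quadratic says `(m t + q)² = (θ - 1)² (1 + t)`; dividing by `q²` turns it into
`μ² t² + (2μ - δ²) t + (1 - δ²) = 0` with `‖μ‖ = ‖δ‖ = 1`.

For (a), the constant term is a unit while the other two terms have norm `< 1` as soon as
`‖t‖ < 1`, so the sum cannot vanish. For (b), `δ² ≡ 1`, so the linear coefficient is congruent to
`2μ - 1` modulo the maximal ideal and hence is a unit, while the constant term is not a unit;
Hensel's lemma (`existsUnique_small_root`) gives exactly one root `t` with `‖t‖ < 1`, and it is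
nonzero because `θ ≠ 1 ± q` means `δ² ≠ 1`.
-/

/-- Hensel's lemma at `0` for a quadratic with integral coefficients, unit linear coefficient and
topologically nilpotent constant term, stated in `ℚ_[p]`. -/
theorem existsUnique_small_root (p : ℕ) [Fact p.Prime] {a b c : ℚ_[p]}
    (ha : ‖a‖ ≤ 1) (hb : ‖b‖ = 1) (hc : ‖c‖ < 1) :
    ∃! t : ℚ_[p], a * t ^ 2 + b * t + c = 0 ∧ ‖t‖ < 1 := by
  obtain ⟨a, rfl⟩ : ∃ x : ℤ_[p], (x : ℚ_[p]) = a := ⟨⟨a, ha⟩, rfl⟩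
  obtain ⟨b, rfl⟩ : ∃ x : ℤ_[p], (x : ℚ_[p]) = b := ⟨⟨b, hb.le⟩, rfl⟩
  obtain ⟨c, rfl⟩ : ∃ x : ℤ_[p], (x : ℚ_[p]) = c := ⟨⟨c, hc.le⟩, rfl⟩
  let F : Polynomial ℤ_[p] :=
    Polynomial.C a * Polynomial.X ^ 2 + Polynomial.C b * Polynomial.X + Polynomial.C c
  have hF : ∀ t, F.aeval t = a * t ^ 2 + b * t + c := fun t => by simp [F]
  have hd : F.derivative.aeval (0 : ℤ_[p]) = b := by simp [F]
  have hb' : ‖F.derivative.aeval (0 : ℤ_[p])‖ = 1 := by rw [hd]; exact hb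
  obtain ⟨t, ht, ht1, -, hu⟩ := hensels_lemma (F := F) (a := (0 : ℤ_[p])) (by
    rw [hb', hF]; simpa using hc)
  rw [hb'] at ht1 hu
  rw [hF] at ht
  refine ⟨t, ⟨by simpa using congrArg ((↑) : ℤ_[p] → ℚ_[p]) ht, by simpa using ht1⟩, ?_⟩
  rintro s ⟨hs, hs1⟩
  obtain ⟨s, rfl⟩ : ∃ x : ℤ_[p], (x : ℚ_[p]) = s := ⟨⟨s, hs1.le⟩, rfl⟩
  rw [hu s (by rw [hF]; exact Subtype.ext (by simpa using hs)) (by simpa using hs1)]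

/-- The quadratic in the variable `z - 1`, divided by `q ^ 2`. -/
theorem kv_iff_normalized {K : Type*} [Field K] {m q d z : K} (hq : q ≠ 0) :
    m ^ 2 * z ^ 2 + (2 * m * (q - m) - d ^ 2) * z + (q - m) ^ 2 = 0 ↔
      (m / q) ^ 2 * (z - 1) ^ 2 + (2 * (m / q) - (d / q) ^ 2) * (z - 1)
        + (1 - (d / q) ^ 2) = 0 := by
  have h : m ^ 2 * z ^ 2 + (2 * m * (q - m) - d ^ 2) * z + (q - m) ^ 2 =
      q ^ 2 * ((m / q) ^ 2 * (z - 1) ^ 2 + (2 * (m / q) - (d / q) ^ 2) * (z - 1)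
        + (1 - (d / q) ^ 2)) := by
    field_simp
    ring
  rw [h, mul_eq_zero, or_iff_right (pow_ne_zero 2 hq)]


/-- Proposition 8(8),(9): for odd `p`, `p ∣ q`, `θ ∉ {1 ± q}` and
`‖m‖ = ‖θ - 1‖ = ‖q‖`: (a) if `‖(θ-1)² - q²‖ = ‖q‖²` then (kv) has no
solution with `0 < ‖z - 1‖ < 1`; (b) if `‖q - 2m‖ = ‖q‖` and
`‖θ - 1 + q‖ < ‖q‖` or `‖θ - 1 - q‖ < ‖q‖`, it has exactly one. -/
theorem kv_solutions_cases89 (p : ℕ) [Fact p.Prime] (hp : p ≠ 2)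
    (q : ℕ) (hq : 2 ≤ q) (hpq : p ∣ q)
    (θ : ℚ_[p]) (hθ : ‖θ - 1‖ ≤ 1 / p)
    (hθ1 : θ ≠ 1 + q) (hθ2 : θ ≠ 1 - q)
    (m : ℕ) (hm1 : 1 ≤ m) (hm2 : m ≤ q - 1)
    (hnorm : ‖(m : ℚ_[p])‖ = ‖θ - 1‖ ∧ ‖θ - 1‖ = ‖(q : ℚ_[p])‖) :
    (‖(θ - 1) ^ 2 - (q : ℚ_[p]) ^ 2‖ = ‖(q : ℚ_[p])‖ ^ 2 →
      ¬ ∃ z : ℚ_[p],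
        ((m : ℚ_[p]) ^ 2 * z ^ 2 +
          (2 * (m : ℚ_[p]) * ((q : ℚ_[p]) - m) - (θ - 1) ^ 2) * z +
          ((q : ℚ_[p]) - m) ^ 2 = 0) ∧
        0 < ‖z - 1‖ ∧ ‖z - 1‖ < 1) ∧
    (‖(q : ℚ_[p]) - 2 * m‖ = ‖(q : ℚ_[p])‖ →
      (‖θ - 1 + q‖ < ‖(q : ℚ_[p])‖ ∨ ‖θ - 1 - q‖ < ‖(q : ℚ_[p])‖) →
      ∃! z : ℚ_[p],
        ((m : ℚ_[p]) ^ 2 * z ^ 2 +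
          (2 * (m : ℚ_[p]) * ((q : ℚ_[p]) - m) - (θ - 1) ^ 2) * z +
          ((q : ℚ_[p]) - m) ^ 2 = 0) ∧
        0 < ‖z - 1‖ ∧ ‖z - 1‖ < 1) := by
  obtain ⟨hmd, hdq⟩ := hnorm
  have hq0 : (q : ℚ_[p]) ≠ 0 := by
    have : q ≠ 0 := by omega
    exact_mod_cast this
  have hqn : ‖(q : ℚ_[p])‖ ≠ 0 := norm_ne_zero_iff.mpr hq0
  have hqpos : 0 < ‖(q : ℚ_[p])‖ := norm_pos_iff.mpr hq0
  have add_lt {x y : ℚ_[p]} (hx : ‖x‖ < 1) (hy : ‖y‖ < 1) : ‖x + y‖ < 1 :=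
    (Padic.nonarchimedean x y).trans_lt (max_lt hx hy)
  simp only [kv_iff_normalized hq0]
  have hμ : ‖(m : ℚ_[p]) / q‖ = 1 := by rw [norm_div, hmd, hdq, div_self hqn]
  have hδ : ‖(θ - 1) / q‖ = 1 := by rw [norm_div, hdq, div_self hqn]
  have h1 : ‖(θ - 1) ^ 2 - (q : ℚ_[p]) ^ 2‖ = ‖(q : ℚ_[p])‖ ^ 2 →
      ‖1 - ((θ - 1) / q) ^ 2‖ = 1 := fun h => by
    rw [show 1 - ((θ - 1) / q) ^ 2 = -(((θ - 1) ^ 2 - (q : ℚ_[p]) ^ 2) / q ^ 2) by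
      field_simp; ring, norm_neg, norm_div, h, norm_pow, div_self (pow_ne_zero 2 hqn)]
  have h2 : ‖(q : ℚ_[p]) - 2 * m‖ = ‖(q : ℚ_[p])‖ → ‖2 * ((m : ℚ_[p]) / q) - 1‖ = 1 := fun h => by
    rw [show 2 * ((m : ℚ_[p]) / q) - 1 = -((q - 2 * m) / q) by field_simp; ring,
      norm_neg, norm_div, h, div_self hqn]
  have h3 : (‖θ - 1 + q‖ < ‖(q : ℚ_[p])‖ ∨ ‖θ - 1 - q‖ < ‖(q : ℚ_[p])‖) →
      (‖(θ - 1) / q + 1‖ < 1 ∨ ‖(θ - 1) / q - 1‖ < 1) := by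
    rw [show (θ - 1) / q + 1 = (θ - 1 + q) / q by field_simp,
      show (θ - 1) / q - 1 = (θ - 1 - q) / q by field_simp, norm_div, norm_div,
      div_lt_one hqpos, div_lt_one hqpos]
    exact id
  have h4 : 1 - ((θ - 1) / q) ^ 2 ≠ 0 := by
    intro h
    have : (θ - (1 + q)) * (θ - (1 - q)) = 0 := by
      field_simp at h
      linear_combination -h
    rcases mul_eq_zero.mp this with h | h
    · exact hθ1 (sub_eq_zero.mp h)
    · exact hθ2 (sub_eq_zero.mp h)
  generalize (m : ℚ_[p]) / q = μ at *
  generalize (θ - 1) / q = δ at *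
  constructor
  · rintro h ⟨z, hz, -, hz1⟩
    replace h := h1 h
    have hlin : ‖2 * μ - δ ^ 2‖ ≤ 1 := by
      rw [sub_eq_add_neg]
      refine (Padic.nonarchimedean (2 * μ) (-δ ^ 2)).trans (max_le ?_ (by simp [hδ]))
      rw [norm_mul, hμ, mul_one]
      exact_mod_cast Padic.norm_int_le_one (p := p) 2
    have hsmall : ‖μ ^ 2 * (z - 1) ^ 2 + (2 * μ - δ ^ 2) * (z - 1)‖ < 1 := by
      apply add_lt
      · rw [norm_mul, norm_pow, norm_pow, hμ, one_pow, one_mul]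
        exact pow_lt_one₀ (norm_nonneg _) hz1 two_ne_zero
      · rw [norm_mul]
        exact mul_lt_one_of_nonneg_of_lt_one_right hlin (norm_nonneg _) hz1
    rw [eq_neg_of_add_eq_zero_left hz, norm_neg, h] at hsmall
    exact lt_irrefl _ hsmall
  · intro hm hd
    replace hm := h2 hm
    have hc : ‖1 - δ ^ 2‖ < 1 := by
      -- Both factors of `(δ + 1) (δ - 1)` are integral, and one of them has norm `< 1`.
      have hplus : ‖δ + 1‖ ≤ 1 :=
        (Padic.nonarchimedean δ 1).trans (max_le hδ.le (by simp))
      have hminus : ‖δ - 1‖ ≤ 1 := by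
        rw [sub_eq_add_neg]
        exact (Padic.nonarchimedean δ (-1)).trans (max_le hδ.le (by simp))
      rw [show 1 - δ ^ 2 = -((δ + 1) * (δ - 1)) by ring, norm_neg, norm_mul]
      rcases h3 hd with h | h
      · exact mul_lt_one_of_nonneg_of_lt_one_left (norm_nonneg _) h hminus
      · exact mul_lt_one_of_nonneg_of_lt_one_right hplus (norm_nonneg _) h
    have hb : ‖2 * μ - δ ^ 2‖ = 1 := by
      rw [show 2 * μ - δ ^ 2 = (2 * μ - 1) + (1 - δ ^ 2) by ring,
        Padic.add_eq_max_of_ne (by rw [hm]; exact hc.ne'), hm, max_eq_left hc.le]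
    obtain ⟨t, ⟨ht, ht1⟩, hu⟩ := existsUnique_small_root p (a := μ ^ 2) (by simp [hμ]) hb hc
    refine ⟨t + 1, ⟨by simpa using ht, ?_, by simpa using ht1⟩, ?_⟩
    · rw [add_sub_cancel_right, norm_pos_iff]
      rintro rfl
      exact h4 (by simpa using ht)
    · rintro z ⟨hz, -, hz1⟩
      exact sub_eq_iff_eq_add.mp (hu _ ⟨hz, hz1⟩)
end

section
/- Let q ≥ 2 be an integer, let θ ∈ ℚ_2 satisfy |θ−1|_2 ≤ 1/4, θ ≠ 1+q and θ ≠ 1−q, and let m be an integer with 1 ≤ m ≤ q−1 such that |m|_2 > |θ−1|_2 = |q|_2 > |4m|_2 (equivalently, |θ−1|_2 = |q|_2 = |m|_2/2). If the discriminant (θ−1)² − 4m(q−m) is a square in ℚ_2, then every root z ∈ ℚ_2 of the equation m²·z² + (2m(q−m) − (θ−1)²)·z + (q−m)² = 0 satisfies 0 < |z−1|_2 < 1/2. -/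
/-!
The residue field of `ℤ_[2]` has two elements, so two 2-adic units always differ by an element of
norm `< 1` (`norm_sub_lt_one_of_units`). Norms in `ℚ_[2]` are powers of `2`, so the hypotheses
force `‖θ - 1‖ = ‖q‖ = ‖m‖ / 2`; hence `a = (θ - 1) / (2 m)` and `b = q / (2 m)` are units. Writing
`z = 1 + w` and dividing the equation by `m ^ 2`, it becomes `(w + 2 b) ^ 2 = 4 a ^ 2 (1 + w)`, i.e.
`w ^ 2 = -(4 (b - a ^ 2) w + 4 (b ^ 2 - a ^ 2))`.
If `w = 0` then `a = ± b`, that is `θ = 1 ± q`, which is excluded. If `‖w‖ ≥ 1 / 2`, the left side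
has norm strictly larger than both `‖w‖ / 4` and `‖b ^ 2 - a ^ 2‖ / 4 < 1 / 4`, contradicting the
ultrametric inequality.
-/

theorem norm_sub_lt_one_of_units (a b : ℚ_[2]) (ha : ‖a‖ = 1) (hb : ‖b‖ = 1) : ‖a - b‖ < 1 := by
  have key : ∀ x : ℤ_[2], ‖x‖ = 1 → PadicInt.toZMod x = 1 := by
    intro x hx
    have h0 : PadicInt.toZMod x ≠ 0 := by
      intro h
      have h1 : x ∈ RingHom.ker (PadicInt.toZMod (p := 2)) := h
      rw [PadicInt.ker_toZMod, IsLocalRing.mem_maximalIdeal, PadicInt.mem_nonunits] at h1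
      linarith
    -- In `ZMod 2` the only nonzero element is `1`.
    revert h0
    generalize PadicInt.toZMod x = y
    revert y
    decide
  obtain ⟨x, rfl⟩ : ∃ x : ℤ_[2], (x : ℚ_[2]) = a := ⟨⟨a, ha.le⟩, rfl⟩
  obtain ⟨y, rfl⟩ : ∃ y : ℤ_[2], (y : ℚ_[2]) = b := ⟨⟨b, hb.le⟩, rfl⟩
  have h1 : x - y ∈ RingHom.ker (PadicInt.toZMod (p := 2)) := by
    rw [RingHom.mem_ker, map_sub, key x ha, key y hb, sub_self]
  rw [PadicInt.ker_toZMod, IsLocalRing.mem_maximalIdeal, PadicInt.mem_nonunits] at h1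
  exact h1

theorem norm_two_padic : ‖(2 : ℚ_[2])‖ = 1 / 2 := by
  have := Padic.norm_p (p := 2)
  norm_num at this ⊢
  exact this

theorem norm_four_padic : ‖(4 : ℚ_[2])‖ = 1 / 4 := by
  rw [show (4 : ℚ_[2]) = 2 * 2 by norm_num, norm_mul, norm_two_padic]
  norm_num

/-- Norms in `ℚ_[2]` are powers of `2`, so none lies strictly between `1 / 2` and `2`. -/
theorem norm_eq_one_of_half_lt_of_lt_two (x : ℚ_[2]) (h1 : 1 / 2 < ‖x‖) (h2 : ‖x‖ < 2) :
    ‖x‖ = 1 := by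
  have hx : x ≠ 0 := by
    rintro rfl
    norm_num at h1
  rw [Padic.norm_eq_zpow_neg_valuation hx] at *
  generalize -x.valuation = k at *
  push_cast at *
  have e1 : (2 : ℝ) ^ (-1 : ℤ) < 2 ^ k := by norm_num at h1 ⊢; exact h1
  have e2 : (2 : ℝ) ^ k < 2 ^ (1 : ℤ) := by simpa using h2
  rw [zpow_lt_zpow_iff_right₀ (by norm_num)] at e1 e2
  obtain rfl : k = 0 := by omega
  simp

/-- The bound on `w = z - 1` for the normalised equation. Only the fact that `b - a ^ 2` and
`b ^ 2 - a ^ 2` are differences of units is used. -/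
theorem norm_root_lt_half (a b w : ℚ_[2]) (ha : ‖a‖ = 1) (hb : ‖b‖ = 1)
    (h : (w + 2 * b) ^ 2 = 4 * a ^ 2 * (1 + w)) : ‖w‖ < 1 / 2 := by
  by_contra! hw
  have h1 : ‖b - a ^ 2‖ < 1 := norm_sub_lt_one_of_units _ _ hb (by simp [ha])
  have h2 : ‖b ^ 2 - a ^ 2‖ < 1 := norm_sub_lt_one_of_units _ _ (by simp [hb]) (by simp [ha])
  have e : w ^ 2 = -(4 * (b - a ^ 2) * w + 4 * (b ^ 2 - a ^ 2)) := by linear_combination h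
  have hn := congrArg norm e
  rw [norm_neg, norm_pow] at hn
  have hm := Padic.nonarchimedean (4 * (b - a ^ 2) * w) (4 * (b ^ 2 - a ^ 2))
  rw [← hn, norm_mul, norm_mul, norm_mul, norm_four_padic] at hm
  rcases le_max_iff.1 hm with h3 | h3
  · nlinarith [norm_nonneg w]
  · nlinarith

/-- Proposition: over `ℚ_2` with `θ ∉ {1 ± q}` and
`‖m‖₂ > ‖θ - 1‖₂ = ‖q‖₂ > ‖4m‖₂`, if the discriminant is a square in `ℚ_2`
then every root of (kv) satisfies `0 < ‖z - 1‖₂ < 1/2`. -/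
theorem kv2_roots_in_E (q : ℕ) (hq : 2 ≤ q)
    (θ : ℚ_[2]) (hθ : ‖θ - 1‖ ≤ 1 / 4)
    (hθ1 : θ ≠ 1 + q) (hθ2 : θ ≠ 1 - q)
    (m : ℕ) (hm1 : 1 ≤ m) (hm2 : m ≤ q - 1)
    (hnorm1 : ‖(m : ℚ_[2])‖ > ‖θ - 1‖)
    (hnorm2 : ‖θ - 1‖ = ‖(q : ℚ_[2])‖)
    (hnorm3 : ‖(q : ℚ_[2])‖ > ‖(4 * m : ℚ_[2])‖)
    (hdisc : ∃ d : ℚ_[2], d ^ 2 = (θ - 1) ^ 2 - 4 * m * ((q : ℚ_[2]) - m)) :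
    ∀ z : ℚ_[2],
      ((m : ℚ_[2]) ^ 2 * z ^ 2 +
        (2 * (m : ℚ_[2]) * ((q : ℚ_[2]) - m) - (θ - 1) ^ 2) * z +
        ((q : ℚ_[2]) - m) ^ 2 = 0) →
      0 < ‖z - 1‖ ∧ ‖z - 1‖ < 1 / 2 := by
  intro z hz
  have hm0 : (m : ℚ_[2]) ≠ 0 := by
    exact_mod_cast (by omega : m ≠ 0)
  have hmpos : 0 < ‖(m : ℚ_[2])‖ := norm_pos_iff.2 hm0
  rw [norm_mul, norm_four_padic] at hnorm3
  have hb : ‖(q : ℚ_[2]) / (2 * m)‖ = 1 := by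
    apply norm_eq_one_of_half_lt_of_lt_two
    · rw [norm_div, norm_mul, norm_two_padic, lt_div_iff₀ (by positivity)]
      linarith
    · rw [norm_div, norm_mul, norm_two_padic, div_lt_iff₀ (by positivity)]
      linarith
  have ha : ‖(θ - 1) / (2 * m)‖ = 1 := by
    rw [norm_div, hnorm2, ← norm_div, hb]
  constructor
  · rw [norm_pos_iff, sub_ne_zero]
    rintro rfl
    -- At `z = 1` the equation reads `q ^ 2 = (θ - 1) ^ 2`.
    have h : (θ - (1 + q)) * (θ - (1 - q)) = 0 := by linear_combination -hz
    rcases mul_eq_zero.1 h with h | h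
    · exact hθ1 (sub_eq_zero.1 h)
    · exact hθ2 (sub_eq_zero.1 h)
  · refine norm_root_lt_half _ _ (z - 1) ha hb ?_
    field_simp
    linear_combination 4 * hz
end
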